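/- Let φ be a CNF formula with variables x_1,…,x_n and nonempty clauses c_1,…,c_m. Let G=(V,A,4) be the temporal graph with V={x_1,…,x_n}∪{c_1,…,c_m}∪{r} and A consisting of: the arcs (r,x_i,1,2) and (r,x_i,2,3) for every i∈[n]; the arc (x_i,c_j,2,3) for every clause c_j and variable x_i occurring positively in c_j; and the arc (x_i,c_j,3,4) for every clause c_j and variable x_i occurring negatively in c_j. Then, for each d∈{FT,MW}, G has a spanning d-TOB with root r if and only if φ is satisfiable. (Note that every temporal arc of G has elapsed time 1.) -/

import Mathlib

open scoped Classical

universe u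

/-- A temporal arc `(u, v, s, t)`: tail `u`, head `v`, starting time `s`, arrival time `t`. -/
abbrev TArc (α : Type u) := α × α × ℕ × ℕ

/-- The tail vertex of a temporal arc. -/
def TArc.tail {α : Type u} (a : TArc α) : α := a.1

/-- The head vertex of a temporal arc. -/
def TArc.head {α : Type u} (a : TArc α) : α := a.2.1

/-- The starting time of a temporal arc. -/
def TArc.ts {α : Type u} (a : TArc α) : ℕ := a.2.2.1

/-- The arrival time of a temporal arc. -/
def TArc.ta {α : Type u} (a : TArc α) : ℕ := a.2.2.2

/-- The elapsed time of a temporal arc. -/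
def TArc.el {α : Type u} (a : TArc α) : ℕ := TArc.ta a - TArc.ts a

/-- A temporal graph `(V, A, τ)`. -/
structure TempGraph (α : Type u) where
  V : Finset α
  A : Finset (TArc α)
  τ : ℕ
  nonempty : V.Nonempty
  valid : ∀ a ∈ A, TArc.tail a ∈ V ∧ TArc.head a ∈ V ∧ TArc.tail a ≠ TArc.head a ∧
      1 ≤ TArc.ts a ∧ TArc.ts a ≤ TArc.ta a ∧ TArc.ta a ≤ τ

variable {α : Type u}

/-- `IsWalk S u v L` : `L` is the list of arcs of a temporal `(u,v)`-walk using arcs from `S`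
(the trivial walk, `L = []`, requires `u = v`). -/
def IsWalk (S : Finset (TArc α)) : α → α → List (TArc α) → Prop
  | u, v, [] => u = v
  | u, v, a :: L => a ∈ S ∧ TArc.tail a = u ∧ (∀ b ∈ L.head?, TArc.ta a ≤ TArc.ts b) ∧
      IsWalk S (TArc.head a) v L

/-- The starting time of a walk (`0` for the trivial walk). -/
def tsW (L : List (TArc α)) : ℕ := (L.map TArc.ts).headI

/-- The arrival time of a walk (`0` for the trivial walk). -/
def taW (L : List (TArc α)) : ℕ := (L.map TArc.ta).getLastD 0

/-- The duration of a walk. -/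
def durW (L : List (TArc α)) : ℕ := taW L - tsW L

/-- The travelling time of a walk. -/
def ttW (L : List (TArc α)) : ℕ := (L.map TArc.el).sum

/-- The waiting time of a walk. -/
def waitW (L : List (TArc α)) : ℕ :=
  (List.zipWith (fun a b => TArc.ts b - TArc.ta a) L L.tail).sum

/-- The final vertex of a walk starting at `u` with arc list `L`. -/
def endv (u : α) (L : List (TArc α)) : α := (L.map TArc.head).getLastD u

/-- The sequence of vertices of a walk starting at `u` with arc list `L`. -/
def verts (u : α) (L : List (TArc α)) : List α := u :: L.map TArc.head

/-- A walk is a (temporal) path when its vertices are pairwise distinct. -/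
def IsPathList (u : α) (L : List (TArc α)) : Prop := (verts u L).Nodup

/-- The six optimisation criteria: earliest arrival, fastest time, latest departure,
minimum transfers, minimum waiting time, shortest travelling time. -/
inductive DistKind : Type
  | EA | FT | LD | MT | MW | ST
  deriving DecidableEq

/-- The value of a walk for each criterion. -/
def wval : DistKind → List (TArc α) → ℕ
  | .EA, L => taW L
  | .FT, L => durW L
  | .LD, L => tsW L
  | .MT, L => L.length
  | .MW, L => waitW L
  | .ST, L => ttW L

/-- `Realizes d S u v L` : `L` is a temporal `(u,v)`-walk within `S` attaining the optimum
(minimum, or maximum for `LD`) of the criterion `d` among all temporal `(u,v)`-walks in `S`. -/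
def Realizes (d : DistKind) (S : Finset (TArc α)) (u v : α) (L : List (TArc α)) : Prop :=
  IsWalk S u v L ∧ ∀ L', IsWalk S u v L' →
    if d = DistKind.LD then wval d L' ≤ wval d L else wval d L ≤ wval d L'

/-- The distance value `d_G(u,v) ∈ ℕ∞` (`+∞` when `v` is not temporally reachable from `u`;
`LD_G(u,u) = τ + 1`). -/
noncomputable def distVal (d : DistKind) (G : TempGraph α) (u v : α) : ℕ∞ :=
  if d = DistKind.LD then
    (if u = v then ((G.τ : ℕ∞) + 1)
     else if ∃ L, IsWalk G.A u v L then
       sSup {n : ℕ∞ | ∃ L, IsWalk G.A u v L ∧ n = (tsW L : ℕ∞)}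
     else ⊤)
  else sInf {n : ℕ∞ | ∃ L, IsWalk G.A u v L ∧ n = (wval d L : ℕ∞)}

/-- Every vertex of `Vs` is temporally reachable from `r` using arcs from `S`. -/
def ReachAll (S : Finset (TArc α)) (Vs : Finset α) (r : α) : Prop :=
  ∀ v ∈ Vs, ∃ L, IsWalk S r v L

/-- `B` is a temporal out-branching (TOB) with root `r`: its arc set is a minimal set of
temporal arcs such that every vertex of `B` is temporally reachable from `r`. -/
def IsTOB (B : TempGraph α) (r : α) : Prop :=
  r ∈ B.V ∧ ReachAll B.A B.V r ∧ ∀ S ⊂ B.A, ¬ ReachAll S B.V r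

/-- `B` is a temporal subgraph of `G`. -/
def IsSubgraph (B G : TempGraph α) : Prop :=
  B.V ⊆ G.V ∧ B.A ⊆ G.A ∧ B.τ ≤ G.τ

/-- `B` is a `d`-TOB of `G` rooted at `r`. -/
def IsDTOB (d : DistKind) (G B : TempGraph α) (r : α) : Prop :=
  IsTOB B r ∧ IsSubgraph B G ∧ ∀ v ∈ B.V, distVal d B r v = distVal d G r v

/-- `B` is a spanning `d`-TOB of `G` rooted at `r`. -/
def IsSpanningDTOB (d : DistKind) (G B : TempGraph α) (r : α) : Prop :=
  IsDTOB d G B r ∧ B.V = G.V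

/-- `B` is a maximum `d`-TOB of `G` rooted at `r`. -/
def IsMaxDTOB (d : DistKind) (G B : TempGraph α) (r : α) : Prop :=
  IsDTOB d G B r ∧ ∀ B', IsDTOB d G B' r → B'.V.card ≤ B.V.card

/-- The in-degree of `v` with respect to the arc set `S`. -/
noncomputable def inDeg (S : Finset (TArc α)) (v : α) : ℕ :=
  (S.filter fun a => TArc.head a = v).card

/-- A walk in a (static) digraph with arc set `E`. -/
def IsDWalk (E : Finset (α × α)) : α → α → List (α × α) → Prop
  | u, v, [] => u = v
  | u, v, e :: L => e ∈ E ∧ e.1 = u ∧ IsDWalk E e.2 v L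

/-- The digraph `(Vs, E)` is an out-branching with root `r`: every `v ∈ Vs` is the end of
a unique `(r,v)`-walk. -/
def IsOutBranching (Vs : Finset α) (E : Finset (α × α)) (r : α) : Prop :=
  ∀ v ∈ Vs, ∃! L, IsDWalk E r v L

/-- The arc of the underlying multidigraph corresponding to a temporal arc. -/
def proj (a : TArc α) : α × α := (TArc.tail a, TArc.head a)

/-- The temporal subgraph of `G` induced by a set of vertices `Z`. -/
noncomputable def induced (G : TempGraph α) (Z : Finset α) (hne : Z.Nonempty) (hZ : Z ⊆ G.V) :
    TempGraph α where
  V := Z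
  A := G.A.filter fun a => TArc.tail a ∈ Z ∧ TArc.head a ∈ Z
  τ := G.τ
  nonempty := hne
  valid := by
    intro a ha
    simp only [Finset.mem_filter] at ha
    obtain ⟨haA, h1, h2⟩ := ha
    obtain ⟨-, -, h3, h4, h5, h6⟩ := G.valid a haA
    exact ⟨h1, h2, h3, h4, h5, h6⟩

/-- The reverse of a temporal arc with respect to lifetime `τ`. -/
def TArc.rev (τ : ℕ) (a : TArc α) : TArc α :=
  (TArc.head a, TArc.tail a, τ + 1 - TArc.ta a, τ + 1 - TArc.ts a)

/-- The reverse of a temporal graph. -/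
noncomputable def TempGraph.rev (G : TempGraph α) : TempGraph α where
  V := G.V
  A := G.A.image (TArc.rev G.τ)
  τ := G.τ
  nonempty := G.nonempty
  valid := by
    intro b hb
    simp only [Finset.mem_image] at hb
    obtain ⟨a, ha, rfl⟩ := hb
    obtain ⟨h1, h2, h3, h4, h5, h6⟩ := G.valid a ha
    refine ⟨h2, h1, Ne.symm h3, ?_, ?_, ?_⟩ <;>
      simp only [TArc.rev, TArc.tail, TArc.head, TArc.ts, TArc.ta] at * <;> omega

/-- The reverse of a temporal walk. -/
def revWalk (τ : ℕ) (L : List (TArc α)) : List (TArc α) := (L.map (TArc.rev τ)).reverse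

/-- Every vertex of `Vs` temporally reaches `r` using arcs from `S`. -/
def CoReachAll (S : Finset (TArc α)) (Vs : Finset α) (r : α) : Prop :=
  ∀ v ∈ Vs, ∃ L, IsWalk S v r L

/-- `B` is a temporal in-branching (TIB) with root `r`. -/
def IsTIB (B : TempGraph α) (r : α) : Prop :=
  r ∈ B.V ∧ CoReachAll B.A B.V r ∧ ∀ S ⊂ B.A, ¬ CoReachAll S B.V r

/-- `B` is a `d`-TIB of `G` rooted at `r`. -/
def IsDTIB (d : DistKind) (G B : TempGraph α) (r : α) : Prop :=
  IsTIB B r ∧ IsSubgraph B G ∧ ∀ v ∈ B.V, distVal d B v r = distVal d G v r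

/-- `B` is a maximum `d`-TIB of `G` rooted at `r`. -/
def IsMaxDTIB (d : DistKind) (G B : TempGraph α) (r : α) : Prop :=
  IsDTIB d G B r ∧ ∀ B', IsDTIB d G B' r → B'.V.card ≤ B.V.card

/-- The reverse of a temporal subgraph, with respect to the ambient lifetime `τ`. -/
noncomputable def revSub (τ : ℕ) (B : TempGraph α) (h : B.τ ≤ τ) : TempGraph α where
  V := B.V
  A := B.A.image (TArc.rev τ)
  τ := τ
  nonempty := B.nonempty
  valid := by
    intro b hb
    simp only [Finset.mem_image] at hb
    obtain ⟨a, ha, rfl⟩ := hb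
    obtain ⟨h1, h2, h3, h4, h5, h6⟩ := B.valid a ha
    refine ⟨h2, h1, Ne.symm h3, ?_, ?_, ?_⟩ <;>
      simp only [TArc.rev, TArc.tail, TArc.head, TArc.ts, TArc.ta] at * <;> omega

/-- `L` (a walk from `u`) is `d`-prefix-optimal: every prefix of it realizes the distance `d`
from `u` to the end vertex of the prefix. -/
def PrefixOptimal (d : DistKind) (S : Finset (TArc α)) (u : α) (L : List (TArc α)) : Prop :=
  ∀ h ≤ L.length, Realizes d S u (endv u (L.take h)) (L.take h)

/-- `EAd_G(u,v)`: the minimum arrival time among the walks realizing `d_G(u,v)`. -/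
noncomputable def eaVal (d : DistKind) (G : TempGraph α) (u v : α) : ℕ∞ :=
  sInf {n : ℕ∞ | ∃ L, Realizes d G.A u v L ∧ n = (taW L : ℕ∞)}

/-- `G'` is a `d`-temporal out-spanning subgraph (d-TOSS) with root `r` of `G`. -/
def IsDTOSS (d : DistKind) (G G' : TempGraph α) (r : α) : Prop :=
  IsSubgraph G' G ∧ G'.V = G.V ∧
    ∀ v ∈ G.V, ∃ L, IsWalk G'.A r v L ∧ Realizes d G.A r v L

/-- Satisfiability of a CNF formula given by the positive/negative occurrence sets
of its clauses. -/
def Satisfiable (n m : ℕ) (pos neg : Fin m → Finset (Fin n)) : Prop :=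
  ∃ σ : Fin n → Bool, ∀ j : Fin m, (∃ i ∈ pos j, σ i = true) ∨ ∃ i ∈ neg j, σ i = false

/-- Vertex set of the reduction: variables, clauses and the root. -/
abbrev V14 (n m : ℕ) := Sum (Fin n) (Sum (Fin m) Unit)

/-- The root vertex `r`. -/
def rt14 (n m : ℕ) : V14 n m := Sum.inr (Sum.inr ())

/-- The temporal graph of the reduction of Theorem `thm:FT_tob_hard` (elapsed time 1 case):
arcs `(r,x_i,1,2)`, `(r,x_i,2,3)` for every variable, `(x_i,c_j,2,3)` when `x_i` occurs
positively in `c_j` and `(x_i,c_j,3,4)` when `x_i` occurs negatively in `c_j`; every arc has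
elapsed time 1 and the lifetime is 4. -/
noncomputable def G14 (n m : ℕ) (pos neg : Fin m → Finset (Fin n)) :
    TempGraph (V14 n m) where
  V := Finset.univ
  A :=
    (Finset.univ.image fun i : Fin n =>
        ((rt14 n m, Sum.inl i, 1, 2) : TArc (V14 n m)))
    ∪ (Finset.univ.image fun i : Fin n =>
        ((rt14 n m, Sum.inl i, 2, 3) : TArc (V14 n m)))
    ∪ (Finset.univ.biUnion fun j : Fin m =>
        ((pos j).image fun i =>
          ((Sum.inl i, Sum.inr (Sum.inl j), 2, 3) : TArc (V14 n m)))
        ∪ ((neg j).image fun i =>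
          ((Sum.inl i, Sum.inr (Sum.inl j), 3, 4) : TArc (V14 n m))))
  τ := 4
  nonempty := ⟨rt14 n m, Finset.mem_univ _⟩
  valid := by
    intro a ha
    simp only [Finset.mem_union, Finset.mem_image, Finset.mem_biUnion, Finset.mem_univ,
      true_and] at ha
    rcases ha with ((⟨i, rfl⟩ | ⟨i, rfl⟩) | ⟨j, (⟨i, -, rfl⟩ | ⟨i, -, rfl⟩)⟩) <;>
      exact ⟨Finset.mem_univ _, Finset.mem_univ _,
        by simp [TArc.tail, TArc.head, rt14],
        by norm_num [TArc.ts], by norm_num [TArc.ts, TArc.ta], by norm_num [TArc.ta]⟩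

/-- A temporal walk lies in every arc set containing its arcs. -/
theorem IsWalk.of_forall_mem {S T : Finset (TArc α)} {u v : α} {L : List (TArc α)}
    (h : IsWalk S u v L) (hL : ∀ a ∈ L, a ∈ T) : IsWalk T u v L := by
  induction L generalizing u with
  | nil => exact h
  | cons a L ih =>
    obtain ⟨-, h2, h3, h4⟩ := h
    exact ⟨hL a (by simp), h2, h3, ih h4 fun b hb => hL b (by simp [hb])⟩

theorem IsWalk.mem {S : Finset (TArc α)} {u v : α} {L : List (TArc α)}
    (h : IsWalk S u v L) : ∀ a ∈ L, a ∈ S := by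
  induction L generalizing u with
  | nil => simp
  | cons a L ih =>
    obtain ⟨h1, -, -, h4⟩ := h
    simpa [h1] using fun x y s t hb => ih h4 (x, y, s, t) hb

theorem IsWalk.mono {S T : Finset (TArc α)} (hST : S ⊆ T) {u v : α} {L : List (TArc α)}
    (h : IsWalk S u v L) : IsWalk T u v L :=
  h.of_forall_mem fun a ha => hST (h.mem a ha)

/-- If `v` is reachable in `B` and every walk in `B` is at least as good as every walk in the
larger graph `G`, then the distances in `B` and `G` agree. -/
theorem distVal_eq_of_forall_le {d : DistKind} (hd : d ≠ DistKind.LD) {B G : TempGraph α}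
    (hBG : B.A ⊆ G.A) {u v : α} (hr : ∃ L, IsWalk B.A u v L)
    (h : ∀ L L', IsWalk B.A u v L → IsWalk G.A u v L' → wval d L ≤ wval d L') :
    distVal d B u v = distVal d G u v := by
  simp only [distVal, if_neg hd]
  apply le_antisymm
  · obtain ⟨L, hL⟩ := hr
    refine le_sInf ?_
    rintro _ ⟨L', hL', rfl⟩
    exact sInf_le_of_le ⟨L, hL, rfl⟩ (by exact_mod_cast h L L' hL hL')
  · refine sInf_le_sInf ?_
    rintro _ ⟨L, hL, rfl⟩
    exact ⟨L, hL.mono hBG, rfl⟩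

/-- If the distances in `B` and `G` agree, every walk in `G` is matched by one in `B`. -/
theorem exists_isWalk_wval_le {d : DistKind} (hd : d ≠ DistKind.LD) {B G : TempGraph α}
    {u v : α} (h : distVal d B u v = distVal d G u v) (hr : ∃ L, IsWalk B.A u v L)
    {L' : List (TArc α)} (hL' : IsWalk G.A u v L') :
    ∃ L, IsWalk B.A u v L ∧ wval d L ≤ wval d L' := by
  simp only [distVal, if_neg hd] at h
  obtain ⟨L₀, hL₀⟩ := hr
  obtain ⟨L, hL, hLeq⟩ := csInf_mem (s := {n : ℕ∞ | ∃ L, IsWalk B.A u v L ∧ n = (wval d L : ℕ∞)})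
    ⟨_, L₀, hL₀, rfl⟩
  refine ⟨L, hL, ?_⟩
  have : (wval d L : ℕ∞) ≤ wval d L' := by
    rw [← hLeq, h]
    exact sInf_le ⟨L', hL', rfl⟩
  exact_mod_cast this

/-- Every set of arcs reaching all of `Vs` contains a minimal one. -/
theorem ReachAll.exists_minimal_subset {S : Finset (TArc α)} {Vs : Finset α} {r : α}
    (h : ReachAll S Vs r) :
    ∃ T ⊆ S, ReachAll T Vs r ∧ ∀ T' ⊂ T, ¬ ReachAll T' Vs r := by
  obtain ⟨T, hTS, hT⟩ := exists_minimal_le_of_wellFoundedLT (fun T => ReachAll T Vs r) S h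
  exact ⟨T, hTS, hT.prop, fun T' hT' => hT.not_prop_of_lt hT'⟩

section Reduction

variable {n m : ℕ} {pos neg : Fin m → Finset (Fin n)}

/-- The arc `(r, x_i, s, s + 1)`. -/
def varArc (m : ℕ) (i : Fin n) (s : ℕ) : TArc (V14 n m) := (rt14 n m, Sum.inl i, s, s + 1)

/-- The arc `(x_i, c_j, s, s + 1)`. -/
def clauseArc (i : Fin n) (j : Fin m) (s : ℕ) : TArc (V14 n m) :=
  (Sum.inl i, Sum.inr (Sum.inl j), s, s + 1)

theorem mem_G14_A {a : TArc (V14 n m)} :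
    a ∈ (G14 n m pos neg).A ↔ (∃ i, a = varArc m i 1) ∨ (∃ i, a = varArc m i 2) ∨
      (∃ i j, i ∈ pos j ∧ a = clauseArc i j 2) ∨ ∃ i j, i ∈ neg j ∧ a = clauseArc i j 3 := by
  simp only [G14, varArc, clauseArc, Finset.mem_union, Finset.mem_image, Finset.mem_biUnion,
    Finset.mem_univ, true_and]
  grind

theorem isWalk_varArc {S : Finset (TArc (V14 n m))} {i : Fin n} {s : ℕ} (h : varArc m i s ∈ S) :
    IsWalk S (rt14 n m) (Sum.inl i) [varArc m i s] :=
  ⟨h, rfl, by simp, rfl⟩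

theorem isWalk_varArc_clauseArc {S : Finset (TArc (V14 n m))} {i : Fin n} {j : Fin m} {s t : ℕ}
    (h : varArc m i s ∈ S) (h' : clauseArc i j t ∈ S) (hst : s + 1 ≤ t) :
    IsWalk S (rt14 n m) (Sum.inr (Sum.inl j)) [varArc m i s, clauseArc i j t] :=
  ⟨h, rfl, by simpa [varArc, clauseArc, TArc.ta, TArc.ts] using hst, h', rfl, by simp, rfl⟩

theorem isWalk_G14_clause {j : Fin m} {v : V14 n m} {L : List (TArc (V14 n m))}
    (h : IsWalk (G14 n m pos neg).A (Sum.inr (Sum.inl j)) v L) :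
    L = [] ∧ v = Sum.inr (Sum.inl j) := by
  cases L with
  | nil => exact ⟨rfl, h.symm⟩
  | cons a L =>
    obtain ⟨h1, h2, -⟩ := h
    rcases mem_G14_A.1 h1 with ⟨i, rfl⟩ | ⟨i, rfl⟩ | ⟨i, j, -, rfl⟩ | ⟨i, j, -, rfl⟩ <;>
      simp [TArc.tail, varArc, clauseArc, rt14] at h2

theorem isWalk_G14_var {i : Fin n} {v : V14 n m} {L : List (TArc (V14 n m))}
    (h : IsWalk (G14 n m pos neg).A (Sum.inl i) v L) :
    (L = [] ∧ v = Sum.inl i) ∨ ∃ j, v = Sum.inr (Sum.inl j) ∧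
      ((i ∈ pos j ∧ L = [clauseArc i j 2]) ∨ (i ∈ neg j ∧ L = [clauseArc i j 3])) := by
  cases L with
  | nil => exact .inl ⟨rfl, h.symm⟩
  | cons a L =>
    obtain ⟨h1, h2, -, h4⟩ := h
    rcases mem_G14_A.1 h1 with ⟨i, rfl⟩ | ⟨i, rfl⟩ | ⟨i, j, hi, rfl⟩ | ⟨i, j, hi, rfl⟩
    · simp [TArc.tail, varArc, rt14] at h2
    · simp [TArc.tail, varArc, rt14] at h2
    all_goals
      obtain ⟨rfl, rfl⟩ := isWalk_G14_clause h4
      obtain rfl : i = _ := Sum.inl.inj h2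
      simp [hi]

/-- The temporal walks from the root in the reduction graph. -/
theorem isWalk_G14_root {v : V14 n m} {L : List (TArc (V14 n m))}
    (h : IsWalk (G14 n m pos neg).A (rt14 n m) v L) :
    (v = rt14 n m ∧ L = []) ∨
    (∃ i s, v = Sum.inl i ∧ (s = 1 ∨ s = 2) ∧ L = [varArc m i s]) ∨
    ∃ i j s t, v = Sum.inr (Sum.inl j) ∧ L = [varArc m i s, clauseArc i j t] ∧
      ((i ∈ pos j ∧ s = 1 ∧ t = 2) ∨ (i ∈ neg j ∧ (s = 1 ∨ s = 2) ∧ t = 3)) := by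
  cases L with
  | nil => exact .inl ⟨h.symm, rfl⟩
  | cons a L =>
    right
    obtain ⟨h1, h2, h3, h4⟩ := h
    obtain ⟨i, s, hs, rfl⟩ : ∃ i s, (s = 1 ∨ s = 2) ∧ a = varArc m i s := by
      rcases mem_G14_A.1 h1 with ⟨i, rfl⟩ | ⟨i, rfl⟩ | ⟨i, j, -, rfl⟩ | ⟨i, j, -, rfl⟩
      · exact ⟨i, 1, by simp⟩
      · exact ⟨i, 2, by simp⟩
      all_goals simp [TArc.tail, clauseArc, rt14] at h2
    rcases isWalk_G14_var h4 with ⟨rfl, rfl⟩ | ⟨j, rfl, ⟨hi, rfl⟩ | ⟨hi, rfl⟩⟩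
    · exact .inl ⟨i, s, rfl, hs, rfl⟩
    · have : s + 1 ≤ 2 := h3 _ rfl
      exact .inr ⟨i, j, s, 2, rfl, rfl, .inl ⟨hi, by omega, rfl⟩⟩
    · exact .inr ⟨i, j, s, 3, rfl, rfl, .inr ⟨hi, hs, rfl⟩⟩

theorem wval_varArc {d : DistKind} (hd : d = DistKind.FT ∨ d = DistKind.MW) (i : Fin n) (s : ℕ) :
    wval d [varArc m i s] = if d = DistKind.FT then 1 else 0 := by
  rcases hd with rfl | rfl <;>
    simp [wval, durW, waitW, taW, tsW, varArc, TArc.ta, TArc.ts]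

theorem wval_varArc_clauseArc {d : DistKind} (hd : d = DistKind.FT ∨ d = DistKind.MW)
    (i : Fin n) (j : Fin m) {s t : ℕ} (hst : s + 1 ≤ t) :
    wval d [varArc m i s, clauseArc i j t] =
      (if d = DistKind.FT then 2 else 0) + (t - (s + 1)) := by
  rcases hd with rfl | rfl
  · simp only [wval, durW, taW, tsW, varArc, clauseArc, TArc.ta, TArc.ts, List.map,
      List.getLastD_cons, List.getLastD_nil, List.headI_cons, if_true]
    omega
  · simp [wval, waitW, varArc, clauseArc, TArc.ta, TArc.ts]

/-- A minimal arc set reaching every vertex uses at most one of the two arcs into `x_i`. -/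
theorem not_both_varArc {S : Finset (TArc (V14 n m))} (hS : S ⊆ (G14 n m pos neg).A)
    {Vs : Finset (V14 n m)} (hr : ReachAll S Vs (rt14 n m))
    (hmin : ∀ T ⊂ S, ¬ ReachAll T Vs (rt14 n m)) {i : Fin n} (h1 : varArc m i 1 ∈ S) :
    varArc m i 2 ∉ S := by
  intro h2
  refine hmin _ (Finset.erase_ssubset h2) fun v hv => ?_
  have hv1 (k : Fin n) : varArc m k 1 ≠ varArc m i 2 := by simp [varArc]
  have hc (k : Fin n) (j : Fin m) (t : ℕ) : clauseArc k j t ≠ varArc m i 2 := by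
    simp [varArc, clauseArc, rt14]
  obtain ⟨L, hL⟩ := hr v hv
  have hmem := hL.mem
  by_cases hi : varArc m i 2 ∈ L
  · rcases isWalk_G14_root (hL.mono hS) with ⟨-, rfl⟩ | ⟨k, s, rfl, hs, rfl⟩ |
      ⟨k, j, s, t, rfl, rfl, hst⟩
    · simp at hi
    · obtain ⟨rfl, rfl, -⟩ : i = k ∧ 2 = s ∧ s = 2 := by simpa [varArc] using hi
      exact ⟨_, isWalk_varArc (Finset.mem_erase.2 ⟨hv1 i, h1⟩)⟩
    · obtain ⟨rfl, rfl, -⟩ : i = k ∧ 2 = s ∧ s = 2 := by simpa [varArc, clauseArc, rt14] using hi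
      exact ⟨_, isWalk_varArc_clauseArc (Finset.mem_erase.2 ⟨hv1 i, h1⟩)
        (Finset.mem_erase.2 ⟨hc i j t, hmem _ (by simp)⟩) (by omega)⟩
  · exact ⟨L, hL.of_forall_mem fun a ha =>
      Finset.mem_erase.2 ⟨fun h => hi (h ▸ ha), hmem a ha⟩⟩

theorem satisfiable_of_isSpanningDTOB (hne : ∀ j, (pos j ∪ neg j).Nonempty) {d : DistKind}
    (hd : d = DistKind.FT ∨ d = DistKind.MW) {B : TempGraph (V14 n m)}
    (hB : IsSpanningDTOB d (G14 n m pos neg) B (rt14 n m)) : Satisfiable n m pos neg := by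
  obtain ⟨⟨⟨-, hreach, hmin⟩, ⟨-, hBA, -⟩, hdist⟩, hV⟩ := hB
  have hLD : d ≠ DistKind.LD := by rcases hd with rfl | rfl <;> simp
  refine ⟨fun i => decide (varArc m i 1 ∈ B.A), fun j => ?_⟩
  have hj : (Sum.inr (Sum.inl j) : V14 n m) ∈ B.V := by rw [hV]; exact Finset.mem_univ _
  obtain ⟨L', hL', hval⟩ : ∃ L', IsWalk (G14 n m pos neg).A (rt14 n m) (Sum.inr (Sum.inl j)) L' ∧
      wval d L' = if d = DistKind.FT then 2 else 0 := by
    obtain ⟨i, hi⟩ := hne j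
    rcases Finset.mem_union.1 hi with hi | hi
    · exact ⟨_, isWalk_varArc_clauseArc (i := i) (s := 1) (t := 2) (mem_G14_A.2 (.inl ⟨i, rfl⟩))
        (mem_G14_A.2 (.inr (.inr (.inl ⟨i, j, hi, rfl⟩)))) le_rfl,
        wval_varArc_clauseArc hd i j le_rfl⟩
    · exact ⟨_, isWalk_varArc_clauseArc (i := i) (s := 2) (t := 3)
        (mem_G14_A.2 (.inr (.inl ⟨i, rfl⟩)))
        (mem_G14_A.2 (.inr (.inr (.inr ⟨i, j, hi, rfl⟩)))) le_rfl,
        wval_varArc_clauseArc hd i j le_rfl⟩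
  obtain ⟨L, hL, hle⟩ := exists_isWalk_wval_le hLD (hdist _ hj) (hreach _ hj) hL'
  rcases isWalk_G14_root (hL.mono hBA) with ⟨h, -⟩ | ⟨k, s, h, -⟩ | ⟨i, k, s, t, h, rfl, hst⟩
  · simp [rt14] at h
  · simp at h
  obtain rfl : j = k := by simpa using h
  have hmem : varArc m i s ∈ B.A := hL.mem _ (by simp)
  rw [hval, wval_varArc_clauseArc hd i j (by omega)] at hle
  rcases hst with ⟨hi, rfl, rfl⟩ | ⟨hi, hs, rfl⟩
  · exact .inl ⟨i, hi, by simpa using hmem⟩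
  · obtain rfl : s = 2 := by omega
    exact .inr ⟨i, hi, by simpa using fun h1 => not_both_varArc hBA hreach hmin h1 hmem⟩

/-- The arcs of the reduction graph compatible with an assignment `σ`. -/
noncomputable def assignArcs (pos neg : Fin m → Finset (Fin n)) (σ : Fin n → Bool) :
    Finset (TArc (V14 n m)) :=
  (G14 n m pos neg).A.filter fun a => ∀ i,
    ((a = varArc m i 1 ∨ ∃ j, a = clauseArc i j 2) → σ i = true) ∧
    ((a = varArc m i 2 ∨ ∃ j, a = clauseArc i j 3) → σ i = false)

theorem varArc_one_mem_assignArcs {σ : Fin n → Bool} {i : Fin n} :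
    varArc m i 1 ∈ assignArcs pos neg σ ↔ σ i = true := by
  rw [assignArcs, Finset.mem_filter, and_iff_right (mem_G14_A.2 (.inl ⟨i, rfl⟩))]
  simp [varArc, clauseArc, rt14]

theorem varArc_two_mem_assignArcs {σ : Fin n → Bool} {i : Fin n} :
    varArc m i 2 ∈ assignArcs pos neg σ ↔ σ i = false := by
  rw [assignArcs, Finset.mem_filter, and_iff_right (mem_G14_A.2 (.inr (.inl ⟨i, rfl⟩)))]
  simp [varArc, clauseArc, rt14]

theorem clauseArc_two_mem_assignArcs {σ : Fin n → Bool} {i : Fin n} {j : Fin m}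
    (hi : i ∈ pos j) : clauseArc i j 2 ∈ assignArcs pos neg σ ↔ σ i = true := by
  rw [assignArcs, Finset.mem_filter,
    and_iff_right (mem_G14_A.2 (.inr (.inr (.inl ⟨i, j, hi, rfl⟩))))]
  simp [varArc, clauseArc, rt14]

theorem clauseArc_three_mem_assignArcs {σ : Fin n → Bool} {i : Fin n} {j : Fin m}
    (hi : i ∈ neg j) : clauseArc i j 3 ∈ assignArcs pos neg σ ↔ σ i = false := by
  rw [assignArcs, Finset.mem_filter,
    and_iff_right (mem_G14_A.2 (.inr (.inr (.inr ⟨i, j, hi, rfl⟩))))]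
  simp [varArc, clauseArc, rt14]

theorem reachAll_assignArcs {σ : Fin n → Bool}
    (hσ : ∀ j, (∃ i ∈ pos j, σ i = true) ∨ ∃ i ∈ neg j, σ i = false) :
    ReachAll (assignArcs pos neg σ) Finset.univ (rt14 n m) := by
  rintro (i | j | ⟨⟩) -
  · cases h : σ i
    · exact ⟨_, isWalk_varArc (varArc_two_mem_assignArcs.2 h)⟩
    · exact ⟨_, isWalk_varArc (varArc_one_mem_assignArcs.2 h)⟩
  · rcases hσ j with ⟨i, hi, h⟩ | ⟨i, hi, h⟩
    · exact ⟨_, isWalk_varArc_clauseArc (varArc_one_mem_assignArcs.2 h)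
        ((clauseArc_two_mem_assignArcs hi).2 h) le_rfl⟩
    · exact ⟨_, isWalk_varArc_clauseArc (varArc_two_mem_assignArcs.2 h)
        ((clauseArc_three_mem_assignArcs hi).2 h) le_rfl⟩
  · exact ⟨[], rfl⟩

theorem assignArcs_subset {σ : Fin n → Bool} : assignArcs pos neg σ ⊆ (G14 n m pos neg).A :=
  Finset.filter_subset _ _

/-- Walks from the root along arcs compatible with an assignment are optimal. -/
theorem wval_le_of_isWalk_assignArcs {d : DistKind} (hd : d = DistKind.FT ∨ d = DistKind.MW)
    {σ : Fin n → Bool} {v : V14 n m} {L L' : List (TArc (V14 n m))}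
    (hL : IsWalk (assignArcs pos neg σ) (rt14 n m) v L)
    (hL' : IsWalk (G14 n m pos neg).A (rt14 n m) v L') : wval d L ≤ wval d L' := by
  have hmem := hL.mem
  rcases isWalk_G14_root (hL.mono assignArcs_subset) with ⟨rfl, rfl⟩ | ⟨i, s, rfl, -, rfl⟩ |
    ⟨i, j, s, t, rfl, rfl, hst⟩
  · rcases hd with rfl | rfl <;> simp [wval, durW, waitW, taW, tsW]
  · rcases isWalk_G14_root hL' with ⟨h, -⟩ | ⟨i', s', -, -, rfl⟩ | ⟨i', j', s', t', h, -⟩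
    · simp [rt14] at h
    · rw [wval_varArc hd, wval_varArc hd]
    · simp at h
  · have hts : t = s + 1 := by
      rcases hst with ⟨-, rfl, rfl⟩ | ⟨hi, rfl | rfl, rfl⟩
      · rfl
      · have h1 : σ i = true := varArc_one_mem_assignArcs.1 (hmem _ (by simp))
        have h2 : σ i = false := (clauseArc_three_mem_assignArcs hi).1 (hmem _ (by simp))
        simp [h1] at h2
      · rfl
    rcases isWalk_G14_root hL' with ⟨h, -⟩ | ⟨i', s', h, -⟩ | ⟨i', j', s', t', -, rfl, hst'⟩
    · simp [rt14] at h
    · simp at h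
    · rw [wval_varArc_clauseArc hd i j hts.ge, wval_varArc_clauseArc hd i' j' (by omega)]
      omega

theorem exists_isSpanningDTOB_of_satisfiable {d : DistKind}
    (hd : d = DistKind.FT ∨ d = DistKind.MW) (h : Satisfiable n m pos neg) :
    ∃ B, IsSpanningDTOB d (G14 n m pos neg) B (rt14 n m) := by
  obtain ⟨σ, hσ⟩ := h
  obtain ⟨T, hTσ, hT, hmin⟩ := (reachAll_assignArcs hσ).exists_minimal_subset
  have hTG : T ⊆ (G14 n m pos neg).A := hTσ.trans assignArcs_subset
  have hLD : d ≠ DistKind.LD := by rcases hd with rfl | rfl <;> simp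
  let B : TempGraph (V14 n m) :=
    { G14 n m pos neg with A := T, valid := fun a ha => (G14 n m pos neg).valid a (hTG ha) }
  exact ⟨B, ⟨⟨Finset.mem_univ _, hT, hmin⟩, ⟨subset_rfl, hTG, le_rfl⟩, fun v hv =>
    distVal_eq_of_forall_le hLD hTG (hT v hv) fun L L' hL hL' =>
      wval_le_of_isWalk_assignArcs hd (hL.mono hTσ) hL'⟩, rfl⟩

end Reduction

/-- Theorem `thm:FT_tob_hard`, elapsed time 1, `τ = 4`: for
`d ∈ {FT, MW}`, the reduction graph has a spanning `d`-TOB with root `r` iff the CNF formula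
is satisfiable. -/
theorem stmt_14 (n m : ℕ) (pos neg : Fin m → Finset (Fin n))
    (hne : ∀ j, (pos j ∪ neg j).Nonempty)
    (d : DistKind) (hd : d = DistKind.FT ∨ d = DistKind.MW) :
    (∃ B : TempGraph (V14 n m), IsSpanningDTOB d (G14 n m pos neg) B (rt14 n m)) ↔
      Satisfiable n m pos neg := by
  exact ⟨fun ⟨_, hB⟩ => satisfiable_of_isSpanningDTOB hne hd hB,
    exists_isSpanningDTOB_of_satisfiable hd⟩
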